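/- Let (G, h) be a Reeb graph such that G is a cycle, and let k be the top-down iteration number of the cycle with respect to h. Then there exists a drawing of (G, h) with exactly k − 1 crossings. -/

import Mathlib

open Set

/-- A drawing of a Reeb graph `(G, h)`: every vertex `v` is placed at the point
`(x v, h v)` in the plane (distinct vertices at distinct points), and every edge
`{v, w}` of `G` is drawn as the graph of a continuous function of the `y`-coordinate
over the height interval of its two endpoints; such a curve is a continuous
`y`-monotone curve joining the images of the endpoints (it meets every horizontal
line in at most one point). -/
structure ReebDrawing {V : Type*} (G : SimpleGraph V) (h : V → ℝ) where
  /-- the `x`-coordinate of each vertex -/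
  x : V → ℝ
  /-- distinct vertices are mapped to distinct points -/
  inj : Function.Injective fun v => ((x v, h v) : ℝ × ℝ)
  /-- for each edge, the `x`-coordinate of its curve as a function of the height `y` -/
  curve : Sym2 V → ℝ → ℝ
  curve_cont : ∀ e ∈ G.edgeSet, Continuous (curve e)
  curve_end : ∀ v w : V, G.Adj v w → curve s(v, w) (h v) = x v

namespace ReebDrawing

variable {V : Type*} {G : SimpleGraph V} {h : V → ℝ}

/-- The point of the plane where the vertex `v` is drawn. -/
def pos (D : ReebDrawing G h) (v : V) : ℝ × ℝ := (D.x v, h v)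

/-- The set of points of the curve drawn for the edge `{v, w}`. -/
def edgeCurve (D : ReebDrawing G h) (v w : V) : Set (ℝ × ℝ) :=
  {p | p.2 ∈ Set.uIcc (h v) (h w) ∧ p.1 = D.curve s(v, w) p.2}

/-- `p` is a crossing point of the two distinct edges `{v, w}` and `{v', w'}`:
it lies on both curves and is not the image of a shared endpoint. -/
def IsCrossing (D : ReebDrawing G h) (p : ℝ × ℝ) (v w v' w' : V) : Prop :=
  G.Adj v w ∧ G.Adj v' w' ∧ s(v, w) ≠ s(v', w') ∧
    p ∈ D.edgeCurve v w ∧ p ∈ D.edgeCurve v' w' ∧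
    ∀ u : V, (u = v ∨ u = w) → (u = v' ∨ u = w') → p ≠ D.pos u

/-- The set of crossings of a drawing: an unordered pair of (distinct) edges together
with a crossing point of these two edges. -/
def crossingSet (D : ReebDrawing G h) : Set (Sym2 (Sym2 V) × (ℝ × ℝ)) :=
  {q | ∃ v w v' w', q.1 = s(s(v, w), s(v', w')) ∧ D.IsCrossing q.2 v w v' w'}

/-- The number of crossings of a drawing, counted over all pairs of edges. -/
noncomputable def numCrossings (D : ReebDrawing G h) : ℕ∞ := D.crossingSet.encard

/-- The crossings involving the fixed edge `e₀`: the other edge together with the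
crossing point. -/
def edgeCrossings (D : ReebDrawing G h) (e₀ : Sym2 V) : Set (Sym2 V × (ℝ × ℝ)) :=
  {q | ∃ v w v' w', s(v, w) = e₀ ∧ q.1 = s(v', w') ∧ D.IsCrossing q.2 v w v' w'}

/-- The edge `{v, w}` is drawn as a straight line segment. -/
def Straight (D : ReebDrawing G h) (v w : V) : Prop :=
  ∀ y ∈ Set.uIcc (h v) (h w),
    D.curve s(v, w) y = D.x v + (y - h v) * (D.x w - D.x v) / (h w - h v)

/-- The edge `{v, w}` is drawn as an `xy`-monotone curve: besides meeting every
horizontal line at most once (which holds by construction), it meets every vertical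
line at most once. -/
def XYMonotone (D : ReebDrawing G h) (v w : V) : Prop :=
  Set.InjOn (D.curve s(v, w)) (Set.uIcc (h v) (h w))

/-- Edge `{v, w}` is (strictly) left of edge `{v', w'}`: at every height in the
interior of the common `y`-interval, the point of the first curve has strictly
smaller `x`-coordinate. -/
def LeftOf (D : ReebDrawing G h) (v w v' w' : V) : Prop :=
  ∀ y ∈ interior (Set.uIcc (h v) (h w) ∩ Set.uIcc (h v') (h w')),
    D.curve s(v, w) y < D.curve s(v', w') y

end ReebDrawing

/-- The Reeb graph crossing number: the minimum number of crossings over all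
drawings of `(G, h)`. -/
noncomputable def RGCN {V : Type*} (G : SimpleGraph V) (h : V → ℝ) : ℕ∞ :=
  ⨅ D : ReebDrawing G h, D.numCrossings

/-- The number of neighbours of `v` of strictly smaller height. -/
noncomputable def downDeg {V : Type*} (G : SimpleGraph V) (h : V → ℝ) (v : V) : ℕ :=
  {w | G.Adj v w ∧ h w < h v}.ncard

/-- The number of neighbours of `v` of strictly larger height. -/
noncomputable def upDeg {V : Type*} (G : SimpleGraph V) (h : V → ℝ) (v : V) : ℕ :=
  {w | G.Adj v w ∧ h v < h w}.ncard

/-- A generic Reeb graph: all vertex heights are distinct, every vertex has degree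
`1` or `3`, and every vertex has at most `2` lower and at most `2` higher neighbours. -/
def IsGenericReeb {V : Type*} (G : SimpleGraph V) (h : V → ℝ) : Prop :=
  Function.Injective h ∧
  (∀ v : V, (G.neighborSet v).ncard = 1 ∨ (G.neighborSet v).ncard = 3) ∧
  (∀ v : V, downDeg G h v ≤ 2 ∧ upDeg G h v ≤ 2)

/-- A subdivided Reeb graph: every edge joins vertices at consecutive levels (distinct
heights with no vertex height strictly in between), every vertex has degree at most `3`,
with at most `2` lower and at most `2` higher neighbours. -/
def IsSubdividedReeb {V : Type*} (G : SimpleGraph V) (h : V → ℝ) : Prop :=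
  (∀ v w : V, G.Adj v w → h v ≠ h w ∧
    ∀ u : V, h u ∉ Set.Ioo (min (h v) (h w)) (max (h v) (h w))) ∧
  (∀ v : V, (G.neighborSet v).ncard ≤ 3 ∧ downDeg G h v ≤ 2 ∧ upDeg G h v ≤ 2)

/-- `G` is the cycle graph on the enumeration `e` of its vertex set: adjacency holds
exactly between cyclically consecutive vertices. -/
def IsCycleEnum {V : Type*} {n : ℕ} (G : SimpleGraph V) (e : Fin n ≃ V) : Prop :=
  ∀ i j : Fin n, G.Adj (e i) (e j) ↔ ((i.val + 1) % n = j.val ∨ (j.val + 1) % n = i.val)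

/-- A caterpillar: a tree together with a central path (the spine) such that every
vertex is on the spine or adjacent to a spine vertex. -/
def IsCaterpillar {V : Type*} (G : SimpleGraph V) : Prop :=
  G.IsTree ∧ ∃ (n : ℕ) (s : Fin n → V),
    Function.Injective s ∧
    (∀ (i : ℕ) (hi : i + 1 < n), G.Adj (s ⟨i, Nat.lt_of_succ_lt hi⟩) (s ⟨i + 1, hi⟩)) ∧
    (∀ v : V, v ∈ Set.range s ∨ ∃ i : Fin n, G.Adj v (s i))

/-- The `m`-th vertex of the cyclic enumeration `e`, with indices taken modulo `n`. -/
def cycVert {V : Type*} {n : ℕ} (hn : 0 < n) (e : Fin n ≃ V) (m : ℕ) : V :=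
  e ⟨m % n, Nat.mod_lt m hn⟩

/-!
Start the traversal of the cycle with a descent from a top to a bottom, and cut it into `3 * k`
stages: for each of the `k` top-down iterations, a run along tops, the descent, and a run along
bottoms followed by the return to the top level. Give every vertex and every edge an abscissa that
increases along the traversal, and fold the line at the stage `(3 * k + 1) / 2`. Each edge is drawn
as a vertical segment at its abscissa, bent towards its endpoints only near their levels.

After folding, the order of two abscissas depends only on whether the sum of the two stages exceeds
`3 * k + 1`. Two curves can cross only near a level on which they have endpoints ordered
differently from the edges. At a bottom or an intermediate vertex the stages of the vertex and of
its edges agree closely enough to exclude this. At the top level it happens exactly for the pairs of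
descents with stage sum `3 * k + 2` and the pairs of ascents with stage sum `3 * k + 1`, of which
there are `k - 1`, and each contributes one crossing.
-/

namespace ReebDrawing

variable {V : Type*} {G : SimpleGraph V} {h : V → ℝ} {D : ReebDrawing G h} {p : ℝ × ℝ}
  {v w v' w' a c a' c' : V}

theorem edgeCurve_comm (D : ReebDrawing G h) (v w : V) : D.edgeCurve v w = D.edgeCurve w v := by
  simp only [edgeCurve, Set.uIcc_comm (h v), Sym2.eq_swap (a := v)]

theorem IsCrossing.symm (hc : D.IsCrossing p v w v' w') : D.IsCrossing p v' w' v w :=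
  ⟨hc.2.1, hc.1, hc.2.2.1.symm, hc.2.2.2.2.1, hc.2.2.2.1, fun u hu hu' ↦ hc.2.2.2.2.2 u hu' hu⟩

theorem IsCrossing.swap_left (hc : D.IsCrossing p v w v' w') : D.IsCrossing p w v v' w' :=
  ⟨hc.1.symm, hc.2.1, Sym2.eq_swap (a := v) ▸ hc.2.2.1, D.edgeCurve_comm v w ▸ hc.2.2.2.1,
    hc.2.2.2.2.1, fun u hu ↦ hc.2.2.2.2.2 u hu.symm⟩

theorem IsCrossing.congr_left (hc : D.IsCrossing p v w v' w') (he : s(a, c) = s(v, w)) :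
    D.IsCrossing p a c v' w' := by
  obtain ⟨rfl, rfl⟩ | ⟨rfl, rfl⟩ := Sym2.eq_iff.1 he
  exacts [hc, hc.swap_left]

theorem IsCrossing.congr (hc : D.IsCrossing p v w v' w') (he : s(a, c) = s(v, w))
    (he' : s(a', c') = s(v', w')) : D.IsCrossing p a c a' c' :=
  ((hc.congr_left he).symm.congr_left he').symm

theorem mem_crossingSet_iff :
    (s(s(v, w), s(v', w')), p) ∈ D.crossingSet ↔ D.IsCrossing p v w v' w' := by
  refine ⟨?_, fun hc ↦ ⟨v, w, v', w', rfl, hc⟩⟩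
  rintro ⟨a, c, a', c', he, hc⟩
  obtain ⟨h₁, h₂⟩ | ⟨h₁, h₂⟩ := Sym2.eq_iff.1 he
  exacts [hc.congr h₁ h₂, hc.symm.congr h₁ h₂]

end ReebDrawing

/-- The tent function of height `1` supported on `[-ε, ε]`, which switches the curve of an edge
between its column and an endpoint. -/
noncomputable def tent (ε s : ℝ) : ℝ := max 0 (1 - |s| / ε)

section Tent

variable {ε s l : ℝ}

@[fun_prop]
theorem continuous_tent (ε : ℝ) : Continuous (tent ε) := by
  unfold tent
  fun_prop

@[simp]
theorem tent_zero (ε : ℝ) : tent ε 0 = 1 := by simp [tent]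

theorem tent_nonneg (ε s : ℝ) : 0 ≤ tent ε s := le_max_left _ _

theorem tent_le_one (hε : 0 < ε) (s : ℝ) : tent ε s ≤ 1 :=
  max_le zero_le_one (sub_le_self _ (by positivity))

theorem tent_eq_zero (hε : 0 < ε) (hs : ε ≤ |s|) : tent ε s = 0 :=
  max_eq_left (sub_nonpos.2 ((one_le_div hε).2 hs))

theorem tent_eq (hε : 0 < ε) (hs : |s| < ε) : tent ε s = 1 - |s| / ε :=
  max_eq_right (sub_nonneg.2 ((div_lt_one hε).2 hs).le)

theorem tent_eq_one_iff (hε : 0 < ε) : tent ε s = 1 ↔ s = 0 := by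
  refine ⟨fun hs ↦ ?_, by rintro rfl; exact tent_zero ε⟩
  obtain hfar | hnear := le_or_gt ε |s|
  · simp [tent_eq_zero hε hfar] at hs
  · simpa [tent_eq hε hnear, hε.ne'] using hs

theorem tent_eq_iff (hε : 0 < ε) (hl : 0 < l) (hs : s ≤ 0) :
    tent ε s = l ↔ l ≤ 1 ∧ s = -(ε * (1 - l)) := by
  have key : 1 - |s| / ε = l ↔ s = -(ε * (1 - l)) := by
    rw [abs_of_nonpos hs, sub_eq_iff_eq_add, ← sub_eq_iff_eq_add', eq_div_iff hε.ne']
    constructor <;> intro H <;> linarith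
  refine ⟨?_, fun ⟨_, H⟩ ↦ ?_⟩
  · rintro rfl
    obtain hfar | hnear := le_or_gt ε |s|
    · exact absurd (tent_eq_zero hε hfar) hl.ne'
    · exact ⟨tent_le_one hε s, key.1 (tent_eq hε hnear).symm⟩
  · rw [tent, key.2 H, max_eq_right hl.le]

end Tent

theorem lineMap_eq_lineMap_iff {a b a' b' r : ℝ} (ha : a < a') (hb : b' < b) :
    AffineMap.lineMap a b r = AffineMap.lineMap a' b' r ↔
      r = (a' - a) / ((a' - a) + (b - b')) := by
  rw [eq_div_iff (by linarith), AffineMap.lineMap_apply_ring', AffineMap.lineMap_apply_ring']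
  constructor <;> intro H <;> linarith

/-- `ε` is positive and less than half of any distance between two different levels, so that the
bands of radius `ε` around different levels are disjoint. -/
def IsLevelGap {V : Type*} (h : V → ℝ) (ε : ℝ) : Prop :=
  0 < ε ∧ ∀ v w : V, h v ≠ h w → 2 * ε < |h v - h w|

open scoped Topology in
theorem exists_isLevelGap {V : Type*} [Finite V] (h : V → ℝ) : ∃ ε, IsLevelGap h ε := by
  have hgap : ∀ᶠ ε in 𝓝[>] (0 : ℝ), ∀ v w : V, h v ≠ h w → 2 * ε < |h v - h w| := by
    refine Filter.eventually_all.2 fun v ↦ Filter.eventually_all.2 fun w ↦ ?_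
    by_cases hvw : h v = h w
    · simp [hvw]
    · filter_upwards [Ioo_mem_nhdsGT (half_pos (abs_sub_pos.2 hvw))] with ε hε _
      linarith [hε.2]
  have hpos : ∀ᶠ ε in 𝓝[>] (0 : ℝ), 0 < ε := self_mem_nhdsWithin
  exact (hpos.and hgap).exists

section LevelGap

variable {V : Type*} {h : V → ℝ} {ε y : ℝ} {u v w : V}

theorem IsLevelGap.eq_of_near (hgap : IsLevelGap h ε) (hv : |y - h v| < ε) (hw : |y - h w| < ε) :
    h v = h w := by
  by_contra hvw
  have := hgap.2 v w hvw
  have := abs_sub_le (h v) y (h w)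
  rw [abs_sub_comm (h v) y] at this
  linarith

theorem IsLevelGap.far_of_near (hgap : IsLevelGap h ε) (hvw : h v ≠ h w) (hv : |y - h v| < ε) :
    ε ≤ |y - h w| :=
  le_of_not_gt fun hw ↦ hvw (hgap.eq_of_near hv hw)

theorem mem_uIoo_of_near_of_far {a b c ε y : ℝ} (hy : y ∈ Set.uIcc b c) (ha : |y - a| < ε)
    (hb : ε ≤ |y - b|) (hc : ε ≤ |y - c|) : a ∈ Set.uIoo b c := by
  wlog hbc : b ≤ c generalizing b c
  · rw [Set.uIoo_comm]
    exact this (Set.uIcc_comm b c ▸ hy) hc hb (le_of_not_ge hbc)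
  rw [Set.uIcc_of_le hbc] at hy
  rw [abs_of_nonneg (sub_nonneg.2 hy.1)] at hb
  rw [abs_of_nonpos (sub_nonpos.2 hy.2)] at hc
  rw [Set.uIoo_of_le hbc]
  rw [abs_lt] at ha
  constructor <;> linarith

theorem exists_near_or_far (h : V → ℝ) (ε y : ℝ) (v w : V) :
    (∃ a c, s(a, c) = s(v, w) ∧ |y - h a| < ε) ∨ (ε ≤ |y - h v| ∧ ε ≤ |y - h w|) := by
  by_cases hv : |y - h v| < ε
  · exact .inl ⟨v, w, rfl, hv⟩
  by_cases hw : |y - h w| < ε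
  · exact .inl ⟨w, v, Sym2.eq_swap, hw⟩
  exact .inr ⟨not_lt.1 hv, not_lt.1 hw⟩

end LevelGap

/-- A combinatorial recipe for a drawing: every edge gets a column `col` of its own, in which its
curve runs except near the levels of its two endpoints, and every vertex gets an abscissa `x`.
The left-to-right order of two edges is preserved when a curve passes an endpoint of the other
edge, and when both have endpoints on a common level other than the level `t`. -/
structure ColumnLayout {V : Type*} (G : SimpleGraph V) (h : V → ℝ) (t : ℝ) where
  /-- the column of each edge -/
  col : Sym2 V → ℝ
  /-- the abscissa of each vertex -/
  x : V → ℝ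
  col_injOn : Set.InjOn col G.edgeSet
  x_inj : ∀ v w : V, h v = h w → x v = x w → v = w
  pass : ∀ v w v' w' : V, G.Adj v w → G.Adj v' w' → h v ∈ Set.uIoo (h v') (h w') →
    (col s(v, w) < col s(v', w') → x v < col s(v', w')) ∧
      (col s(v', w') < col s(v, w) → col s(v', w') < x v)
  level : ∀ v w v' w' : V, G.Adj v w → G.Adj v' w' → v ≠ v' → h v = h v' → h v ≠ t →
    col s(v, w) < col s(v', w') → x v < x v'

namespace ColumnLayout

variable {V : Type*} {G : SimpleGraph V} {h : V → ℝ} {t ε y : ℝ} {v w v' w' : V} {p : ℝ × ℝ}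

/-- The curve of an edge: its column, moved linearly to an endpoint in the band of radius `ε`
around the level of this endpoint. -/
noncomputable def curve (L : ColumnLayout G h t) (ε : ℝ) (e : Sym2 V) (y : ℝ) : ℝ :=
  L.col e + e.lift ⟨fun v w ↦
    tent ε (y - h v) * (L.x v - L.col e) + tent ε (y - h w) * (L.x w - L.col e),
    fun _ _ ↦ add_comm _ _⟩

theorem continuous_curve (L : ColumnLayout G h t) (ε : ℝ) (e : Sym2 V) :
    Continuous (L.curve ε e) := by
  induction e with
  | _ v w =>
    unfold curve
    simp only [Sym2.lift_mk]
    fun_prop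

theorem curve_of_far (L : ColumnLayout G h t) (hε : 0 < ε) (hv : ε ≤ |y - h v|)
    (hw : ε ≤ |y - h w|) : L.curve ε s(v, w) y = L.col s(v, w) := by
  simp [curve, tent_eq_zero hε hv, tent_eq_zero hε hw]

theorem curve_of_near (L : ColumnLayout G h t) (hgap : IsLevelGap h ε) (hvw : h v ≠ h w)
    (hv : |y - h v| < ε) :
    L.curve ε s(v, w) y = AffineMap.lineMap (L.col s(v, w)) (L.x v) (tent ε (y - h v)) := by
  simp [curve, tent_eq_zero hgap.1 (hgap.far_of_near hvw hv), AffineMap.lineMap_apply_ring',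
    add_comm]

/-- The drawing described by a column layout. -/
noncomputable def drawing (L : ColumnLayout G h t) (hne : ∀ v w : V, G.Adj v w → h v ≠ h w)
    (hgap : IsLevelGap h ε) : ReebDrawing G h where
  x := L.x
  inj v w hvw := L.x_inj v w (congrArg Prod.snd hvw) (congrArg Prod.fst hvw)
  curve := L.curve ε
  curve_cont e _ := L.continuous_curve ε e
  curve_end v w hvw := by
    rw [L.curve_of_near hgap (hne v w hvw) (by simpa using hgap.1)]
    simp

theorem curve_lt_curve_of_near (L : ColumnLayout G h t) (hgap : IsLevelGap h ε)
    (hvw : h v ≠ h w) (hvw' : h v' ≠ h w') (hlt : L.col s(v, w) < L.col s(v', w'))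
    (hx : L.x v < L.x v') (hv : |y - h v| < ε) (hv' : |y - h v'| < ε) :
    L.curve ε s(v, w) y < L.curve ε s(v', w') y := by
  rw [L.curve_of_near hgap hvw hv, L.curve_of_near hgap hvw' hv', ← hgap.eq_of_near hv hv']
  exact lineMap_strict_mono_endpoints hlt hx (tent_nonneg _ _) (tent_le_one hgap.1 _)

theorem curve_ne_curve_of_far (L : ColumnLayout G h t) (hne : ∀ v w : V, G.Adj v w → h v ≠ h w)
    (hgap : IsLevelGap h ε) (hvw : G.Adj v w) (hvw' : G.Adj v' w')
    (hne_edge : s(v, w) ≠ s(v', w')) (hy : y ∈ Set.uIcc (h v') (h w'))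
    (hv' : ε ≤ |y - h v'|) (hw' : ε ≤ |y - h w'|) :
    L.curve ε s(v, w) y ≠ L.curve ε s(v', w') y := by
  rw [L.curve_of_far hgap.1 hv' hw']
  have hcol : L.col s(v, w) ≠ L.col s(v', w') := L.col_injOn.ne hvw hvw' hne_edge
  obtain ⟨a, c, he, ha⟩ | ⟨hv, hw⟩ := exists_near_or_far h ε y v w
  · rw [← he] at hcol ⊢
    have hac : G.Adj a c := by rwa [← SimpleGraph.mem_edgeSet, he]
    have hpass := L.pass a c v' w' hac hvw' (mem_uIoo_of_near_of_far hy ha hv' hw')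
    rw [L.curve_of_near hgap (hne a c hac) ha]
    set l := tent ε (y - h a)
    have hl := tent_nonneg ε (y - h a)
    have hl' := tent_le_one hgap.1 (y - h a)
    conv_rhs => rw [← AffineMap.lineMap_same_apply (L.col s(v', w')) l]
    obtain hlt | hlt := hcol.lt_or_gt
    · exact (lineMap_strict_mono_endpoints hlt (hpass.1 hlt) hl hl').ne
    · exact (lineMap_strict_mono_endpoints hlt (hpass.2 hlt) hl hl').ne'
  · rwa [L.curve_of_far hgap.1 hv hw]

/-- Two edges with endpoints on the level `t` whose left-to-right order there is the reverse of the
order of their columns. -/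
structure Inverted (L : ColumnLayout G h t) (v w v' w' : V) : Prop where
  adj : G.Adj v w
  adj' : G.Adj v' w'
  height : h v = t
  height' : h v' = t
  col_lt : L.col s(v, w) < L.col s(v', w')
  lt_x : L.x v' < L.x v

/-- The unordered pairs of edges whose order is reversed on the level `t`. -/
def invertedPairs (L : ColumnLayout G h t) : Set (Sym2 (Sym2 V)) :=
  {q | ∃ v w v' w', q = s(s(v, w), s(v', w')) ∧ L.Inverted v w v' w'}

variable (L : ColumnLayout G h t) (hne : ∀ v w : V, G.Adj v w → h v ≠ h w)
  (hgap : IsLevelGap h ε)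

theorem ne_of_isCrossing_of_near (hc : (L.drawing hne hgap).IsCrossing p v w v' w')
    (hv : |p.2 - h v| < ε) : v ≠ v' := by
  rintro rfl
  obtain ⟨hvw, hvw', he, ⟨-, hp⟩, ⟨-, hp'⟩, hends⟩ := hc
  refine hends v (.inl rfl) (.inl rfl) ?_
  change p.1 = L.curve ε _ _ at hp hp'
  rw [L.curve_of_near hgap (hne _ _ hvw) hv] at hp
  rw [L.curve_of_near hgap (hne _ _ hvw') hv] at hp'
  have htent : tent ε (p.2 - h v) = 1 := by
    have hcol : L.col s(v, w) - L.col s(v, w') ≠ 0 := sub_ne_zero.2 (L.col_injOn.ne hvw hvw' he)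
    have := hp.symm.trans hp'
    rw [AffineMap.lineMap_apply_ring, AffineMap.lineMap_apply_ring, add_left_inj] at this
    have := (mul_eq_zero.1 (by linear_combination this :
      (1 - tent ε (p.2 - h v)) * (L.col s(v, w) - L.col s(v, w')) = 0)).resolve_right hcol
    linarith
  refine Prod.ext ?_ (sub_eq_zero.1 ((tent_eq_one_iff hgap.1).1 htent))
  rw [hp, htent, AffineMap.lineMap_apply_one]
  rfl

theorem exists_inverted_of_isCrossing (hc : (L.drawing hne hgap).IsCrossing p v w v' w')
    (hlt : L.col s(v, w) < L.col s(v', w')) :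
    |p.2 - t| < ε ∧ ∃ a c a' c', s(a, c) = s(v, w) ∧ s(a', c') = s(v', w') ∧
      L.Inverted a c a' c' := by
  have ⟨hvw, hvw', he, ⟨hy, hp⟩, ⟨hy', hp'⟩, _⟩ := hc
  have hcurve : L.curve ε s(v, w) p.2 = L.curve ε s(v', w') p.2 := hp.symm.trans hp'
  obtain ⟨a', c', he', ha'⟩ | ⟨hfar, hfar'⟩ := exists_near_or_far h ε p.2 v' w'
  swap
  · exact absurd hcurve (L.curve_ne_curve_of_far hne hgap hvw hvw' he hy' hfar hfar')
  obtain ⟨a, c, he, ha⟩ | ⟨hfar, hfar'⟩ := exists_near_or_far h ε p.2 v w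
  swap
  · exact absurd hcurve.symm (L.curve_ne_curve_of_far hne hgap hvw' hvw he.symm hy hfar hfar')
  have hc := hc.congr he he'
  rw [← he, ← he'] at hlt hcurve
  have hlevel : h a = h a' := hgap.eq_of_near ha ha'
  have haa' : a ≠ a' := L.ne_of_isCrossing_of_near hne hgap hc ha
  have hx : ¬ L.x a < L.x a' := fun hx ↦ hcurve.not_lt <|
    L.curve_lt_curve_of_near hgap (hne _ _ hc.1) (hne _ _ hc.2.1) hlt hx ha ha'
  have hat : h a = t := by
    by_contra hat
    exact hx (L.level a c a' c' hc.1 hc.2.1 haa' hlevel hat hlt)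
  have hx' : L.x a ≠ L.x a' := fun hx' ↦ haa' (L.x_inj a a' hlevel hx')
  exact ⟨hat ▸ ha, a, c, a', c', he, he',
    ⟨hc.1, hc.2.1, hat, hlevel ▸ hat, hlt, lt_of_le_of_ne (not_lt.1 hx) hx'.symm⟩⟩

theorem mem_uIcc_of_near_top (hgap : IsLevelGap h ε) (ht : ∀ v, h v ≤ t) (hvt : h v = t)
    (hvw : h v ≠ h w) (hy : y ≤ t) (hnear : |y - t| < ε) : y ∈ Set.uIcc (h v) (h w) := by
  have hdist := hgap.2 v w hvw
  rw [hvt, abs_of_nonneg (sub_nonneg.2 (ht w))] at hdist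
  rw [hvt, Set.uIcc_of_ge (ht w)]
  rw [abs_lt] at hnear
  constructor <;> linarith [hgap.1]

theorem Inverted.exists_meeting_height {L : ColumnLayout G h t}
    (hne : ∀ v w : V, G.Adj v w → h v ≠ h w) (hgap : IsLevelGap h ε)
    (hI : L.Inverted v w v' w') :
    ∃ y < t, |y - t| < ε ∧ ∀ z ≤ t, |z - t| < ε →
      (L.curve ε s(v, w) z = L.curve ε s(v', w') z ↔ z = y) := by
  obtain ⟨hvw, hvw', hvt, hvt', hlt, hx⟩ := hI
  set l := (L.col s(v', w') - L.col s(v, w)) /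
    ((L.col s(v', w') - L.col s(v, w)) + (L.x v - L.x v')) with hl
  have hl0 : 0 < l := div_pos (by linarith) (by linarith)
  have hl1 : l < 1 := (div_lt_one (by linarith)).2 (by linarith)
  have hpos : 0 < ε * (1 - l) := mul_pos hgap.1 (by linarith)
  have hltε : ε * (1 - l) < ε := mul_lt_of_lt_one_right hgap.1 (by linarith)
  refine ⟨t - ε * (1 - l), by linarith, abs_lt.2 ⟨by linarith, by linarith⟩, fun z hz hnear ↦ ?_⟩
  have hcurve := L.curve_of_near hgap (hne v w hvw) (hvt ▸ hnear)
  have hcurve' := L.curve_of_near hgap (hne v' w' hvw') (hvt' ▸ hnear)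
  rw [hcurve, hcurve', hvt, hvt', lineMap_eq_lineMap_iff hlt hx, ← hl,
    tent_eq_iff hgap.1 hl0 (by linarith), and_iff_right hl1.le]
  constructor <;> intro <;> linarith

theorem Inverted.existsUnique_isCrossing {L : ColumnLayout G h t} (ht : ∀ v, h v ≤ t)
    (hI : L.Inverted v w v' w') : ∃! p, (L.drawing hne hgap).IsCrossing p v w v' w' := by
  obtain ⟨y, hyt, hnear, hmeet⟩ := hI.exists_meeting_height hne hgap
  obtain ⟨hvw, hvw', hvt, hvt', hlt, -⟩ := hI
  refine ⟨(L.curve ε s(v, w) y, y), ⟨hvw, hvw', fun he ↦ hlt.ne (by rw [he]),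
    ⟨mem_uIcc_of_near_top hgap ht hvt (hne v w hvw) hyt.le hnear, rfl⟩,
    ⟨mem_uIcc_of_near_top hgap ht hvt' (hne v' w' hvw') hyt.le hnear,
      (hmeet y hyt.le hnear).2 rfl⟩, fun u _ _ hu ↦ ?_⟩, fun p hp ↦ ?_⟩
  · have hyu : y = h u := congrArg Prod.snd hu
    have hut : h v = h u := hgap.eq_of_near (hvt ▸ hnear) (by simpa [hyu] using hgap.1)
    exact hyt.ne (hyu.trans (hut.symm.trans hvt))
  · have hpt := (L.exists_inverted_of_isCrossing hne hgap hp hlt).1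
    obtain ⟨-, -, -, ⟨hmem, hp₁⟩, ⟨-, hp₂⟩, -⟩ := hp
    have hpy := (hmeet p.2 (hmem.2.trans (sup_le (ht v) (ht w))) hpt).1 (hp₁.symm.trans hp₂)
    exact Prod.ext (hpy ▸ hp₁) hpy

theorem numCrossings_drawing (ht : ∀ v, h v ≤ t) :
    (L.drawing hne hgap).numCrossings = L.invertedPairs.encard := by
  have hbij : Set.BijOn Prod.fst (L.drawing hne hgap).crossingSet L.invertedPairs := by
    have hmaps : Set.MapsTo Prod.fst (L.drawing hne hgap).crossingSet L.invertedPairs := by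
      rintro ⟨_, p⟩ ⟨v, w, v', w', rfl, hc⟩
      have hcol := L.col_injOn.ne hc.1 hc.2.1 hc.2.2.1
      wlog hlt : L.col s(v, w) < L.col s(v', w') generalizing v w v' w'
      · rw [Sym2.eq_swap]
        exact this v' w' v w hc.symm hcol.symm (hcol.lt_of_le' (not_lt.1 hlt))
      obtain ⟨-, a, c, a', c', he, he', hI⟩ := L.exists_inverted_of_isCrossing hne hgap hc hlt
      exact ⟨a, c, a', c', by rw [he, he'], hI⟩
    refine .mk hmaps ?_ ?_
    · rintro ⟨q, p⟩ hp ⟨q', p'⟩ hp' (rfl : q = q')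
      obtain ⟨v, w, v', w', rfl, hI⟩ := hmaps hp
      rw [(hI.existsUnique_isCrossing hne hgap ht).unique (ReebDrawing.mem_crossingSet_iff.1 hp)
        (ReebDrawing.mem_crossingSet_iff.1 hp')]
    · rintro _ ⟨v, w, v', w', rfl, hI⟩
      obtain ⟨p, hp, -⟩ := hI.existsUnique_isCrossing hne hgap ht
      exact ⟨_, ReebDrawing.mem_crossingSet_iff.2 hp, rfl⟩
  rw [ReebDrawing.numCrossings, ← hbij.image_eq, hbij.injOn.encard_image]

include hne in
theorem exists_drawing [Finite V] (ht : ∀ v, h v ≤ t) :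
    ∃ D : ReebDrawing G h, D.numCrossings = L.invertedPairs.encard := by
  obtain ⟨ε, hgap⟩ := exists_isLevelGap h
  exact ⟨L.drawing hne hgap, L.numCrossings_drawing hne hgap ht⟩

end ColumnLayout

section AbsSub

variable {a a' c : ℝ}

theorem abs_sub_lt_abs_sub_iff_of_lt (h : a < a') : |a - c| < |a' - c| ↔ 2 * c < a + a' := by
  rw [← sq_lt_sq, ← sub_pos, show (a' - c) ^ 2 - (a - c) ^ 2 = (a' - a) * (a + a' - 2 * c) by ring,
    mul_pos_iff_of_pos_left (sub_pos.2 h), sub_pos]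

theorem abs_sub_lt_abs_sub_iff_of_gt (h : a < a') : |a' - c| < |a - c| ↔ a + a' < 2 * c := by
  rw [← sq_lt_sq, ← sub_pos,
    show (a - c) ^ 2 - (a' - c) ^ 2 = (a' - a) * (2 * c - (a + a')) by ring,
    mul_pos_iff_of_pos_left (sub_pos.2 h), sub_pos]

end AbsSub

/-- The column of an object reached at stage `s` and time `τ` of the traversal. The coordinate
`s - 1 / (τ + 3)` increases along the traversal; the absolute value folds the line at
`(3 * k + 1) / 2`, and the summand `3` keeps the perturbations below `1 / 2`. -/
noncomputable def column (k s τ : ℕ) : ℝ := |(s - 1 / (τ + 3) : ℝ) - (3 * k + 1) / 2|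

section Column

variable {k s s' τ τ' : ℕ}

theorem one_div_add_three_mem_Ioo (τ : ℕ) : 1 / (τ + 3 : ℝ) ∈ Ioo 0 (1 / 2) :=
  ⟨by positivity, one_div_lt_one_div_of_lt two_pos (by linarith [τ.cast_nonneg (α := ℝ)])⟩

theorem sub_one_div_lt_sub_one_div (hs : s ≤ s') (hτ : τ < τ') :
    (s - 1 / (τ + 3) : ℝ) < s' - 1 / (τ' + 3) := by
  have hs : (s : ℝ) ≤ s' := mod_cast hs
  have hτ : 1 / (τ' + 3 : ℝ) < 1 / (τ + 3) := one_div_lt_one_div_of_lt (by positivity) (by simpa)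
  linarith

theorem column_lt_column_iff (hs : s ≤ s') (hτ : τ < τ') :
    column k s τ < column k s' τ' ↔ 3 * k + 2 ≤ s + s' := by
  have h := one_div_add_three_mem_Ioo τ
  have h' := one_div_add_three_mem_Ioo τ'
  rw [column, column, abs_sub_lt_abs_sub_iff_of_lt (sub_one_div_lt_sub_one_div hs hτ)]
  constructor <;> intro H
  · have : (3 * k + 1 : ℝ) < s + s' := by linarith [h.1, h'.1]
    exact_mod_cast this
  · have : (3 * k + 2 : ℝ) ≤ s + s' := by exact_mod_cast H
    linarith [h.2, h'.2]

theorem column_gt_column_iff (hs : s ≤ s') (hτ : τ < τ') :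
    column k s' τ' < column k s τ ↔ s + s' ≤ 3 * k + 1 := by
  have h := one_div_add_three_mem_Ioo τ
  have h' := one_div_add_three_mem_Ioo τ'
  rw [column, column, abs_sub_lt_abs_sub_iff_of_gt (sub_one_div_lt_sub_one_div hs hτ)]
  constructor <;> intro H
  · have : (s + s' : ℝ) < 3 * k + 2 := by linarith [h.2, h'.2]
    exact Nat.le_of_lt_succ (by exact_mod_cast this)
  · have : (s + s' : ℝ) ≤ 3 * k + 1 := by exact_mod_cast H
    linarith [h.1, h'.1]

theorem column_ne_column (hs : s ≤ s') (hτ : τ < τ') : column k s τ ≠ column k s' τ' := by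
  obtain h | h : 3 * k + 2 ≤ s + s' ∨ s + s' ≤ 3 * k + 1 := by omega
  · exact ((column_lt_column_iff hs hτ).2 h).ne
  · exact ((column_gt_column_iff hs hτ).2 h).ne'

end Column

/-- The next index after `j` at which `T` or `B` holds exists and satisfies `B`. -/
def BottomNext (T B : ℕ → Prop) (j : ℕ) : Prop :=
  ∃ d, 0 < d ∧ B (j + d) ∧ ∀ d', 0 < d' → d' < d → ¬ T (j + d') ∧ ¬ B (j + d')

/-- A top from which the traversal reaches a bottom before the next top. The top-down iteration
number is the number of these in a period. -/
def IsDescentStart (T B : ℕ → Prop) (j : ℕ) : Prop := T j ∧ BottomNext T B j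

section Descent

variable {T B : ℕ → Prop}

theorem bottomNext_iff (j : ℕ) : BottomNext T B j ↔
    B (j + 1) ∨ (¬ T (j + 1) ∧ ¬ B (j + 1) ∧ BottomNext T B (j + 1)) := by
  constructor
  · rintro ⟨d, hd, hB, hmin⟩
    obtain rfl | hd1 := eq_or_ne d 1
    · exact .inl hB
    · obtain ⟨hT1, hB1⟩ := hmin 1 one_pos (by omega)
      refine .inr ⟨hT1, hB1, d - 1, by omega, by rwa [Nat.add_assoc, Nat.add_sub_cancel' hd],
        fun d' _ _ ↦ ?_⟩
      simpa only [Nat.add_assoc] using hmin (1 + d') (by omega) (by omega)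
  · rintro (hB | ⟨hT, hB, d, hd, hBd, hmin⟩)
    · exact ⟨1, one_pos, hB, fun d' _ _ ↦ by omega⟩
    · refine ⟨1 + d, by omega, by rwa [← Nat.add_assoc], fun d' hd' hd'' ↦ ?_⟩
      obtain ⟨d', rfl⟩ := Nat.exists_eq_add_of_le (Nat.succ_le_of_lt hd')
      obtain rfl | hpos := d'.eq_zero_or_pos
      · exact ⟨hT, hB⟩
      · simpa only [Nat.add_assoc] using hmin d' hpos (by omega)

theorem exists_isDescentStart (hTB : ∀ j, T j → ¬ B j) {i d : ℕ} (hT : T i) (hB : B (i + d)) :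
    ∃ r, IsDescentStart T B r := by
  induction d using Nat.strong_induction_on generalizing i with
  | _ d ih =>
    obtain rfl | hd := d.eq_zero_or_pos
    · exact absurd hB (hTB i hT)
    by_cases hmin : ∀ d', 0 < d' → d' < d → ¬ T (i + d') ∧ ¬ B (i + d')
    · exact ⟨i, hT, d, hd, hB, hmin⟩
    push Not at hmin
    obtain ⟨d', hd', hlt, hext⟩ := hmin
    by_cases hT' : T (i + d')
    · refine ih (d - d') (by omega) hT' ?_
      rwa [Nat.add_assoc, Nat.add_sub_cancel' hlt.le]
    · exact ih d' hlt hT (hext hT')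

end Descent

/-- A division of the walk `0, 1, 2, …`, which meets the tops `T` and the bottoms `B`, into stages:
in stage `3 * c` it runs through tops, in stage `3 * c + 1` it descends until it reaches a bottom,
and in stage `3 * c + 2` it runs through bottoms and then ascends until it reaches a top. The edge
`j` of the walk joins the vertices `j` and `j + 1`. -/
structure Staging (T B : ℕ → Prop) where
  /-- the stage of the `j`-th vertex -/
  vertex : ℕ → ℕ
  /-- the stage of the edge from the `j`-th vertex to the next one -/
  edge : ℕ → ℕ
  vertex_zero : vertex 0 = 0
  edge_zero : edge 0 = 1
  vertex_le_edge (j : ℕ) : vertex j ≤ edge j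
  edge_le_vertex_add_one (j : ℕ) : edge j ≤ vertex j + 1
  edge_le_vertex_succ (j : ℕ) : edge j ≤ vertex (j + 1)
  vertex_succ_le (j : ℕ) : vertex (j + 1) ≤ edge j + 1
  edge_eq_vertex {j : ℕ} (hT : ¬ T j) : edge j = vertex j
  vertex_succ_eq_edge {j : ℕ} (hT : ¬ T (j + 1)) (hB : ¬ B (j + 1)) : vertex (j + 1) = edge j
  vertex_mod_of_top {j : ℕ} (hT : T j) : vertex j % 3 = 0
  vertex_mod_of_bottom {j : ℕ} (hB : B j) : vertex j % 3 = 2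

open Classical in
/-- The stage of the `j`-th vertex of a walk starting with a descent. It increases when the
walk leaves a top to descend, when it first meets a bottom, and when it returns to a top. -/
noncomputable def vertexStage (T B : ℕ → Prop) : ℕ → ℕ
  | 0 => 0
  | j + 1 =>
    let s := vertexStage T B j + if IsDescentStart T B j then 1 else 0
    s + if (T (j + 1) ∧ s % 3 = 2) ∨ (B (j + 1) ∧ s % 3 = 1) then 1 else 0

open Classical in
/-- The stage of the edge from the `j`-th to the next vertex of a walk starting with a descent. -/
noncomputable def edgeStage (T B : ℕ → Prop) (j : ℕ) : ℕ :=
  vertexStage T B j + if IsDescentStart T B j then 1 else 0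

section Stages

variable {T B : ℕ → Prop}

open Classical in
theorem vertexStage_succ (j : ℕ) : vertexStage T B (j + 1) = edgeStage T B j +
    if (T (j + 1) ∧ edgeStage T B j % 3 = 2) ∨ (B (j + 1) ∧ edgeStage T B j % 3 = 1)
      then 1 else 0 := rfl

theorem bottomNext_of_edgeStage (hTB : ∀ j, T j → ¬ B j) (h0 : IsDescentStart T B 0) (j : ℕ) :
    (edgeStage T B j % 3 = 1 → BottomNext T B j) ∧
      (edgeStage T B j % 3 = 0 → ¬ BottomNext T B j) := by
  induction j with
  | zero => simp [edgeStage, vertexStage, h0, h0.2]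
  | succ j ih =>
    have hnext := bottomNext_iff (T := T) (B := B) j
    have := hTB (j + 1)
    rw [edgeStage, vertexStage_succ]
    grind [IsDescentStart]

theorem vertexStage_succ_mod (hTB : ∀ j, T j → ¬ B j) (h0 : IsDescentStart T B 0) (j : ℕ) :
    (T (j + 1) → vertexStage T B (j + 1) % 3 = 0) ∧
      (B (j + 1) → vertexStage T B (j + 1) % 3 = 2) := by
  have hnext := bottomNext_iff (T := T) (B := B) j
  have := bottomNext_of_edgeStage hTB h0 j
  have := hTB (j + 1)
  rw [vertexStage_succ]
  grind

/-- The staging of a walk that starts with a descent. -/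
noncomputable def Staging.ofDescentStart (hTB : ∀ j, T j → ¬ B j) (h0 : IsDescentStart T B 0) :
    Staging T B where
  vertex := vertexStage T B
  edge := edgeStage T B
  vertex_zero := rfl
  edge_zero := by simp [edgeStage, vertexStage, h0]
  vertex_le_edge j := Nat.le_add_right _ _
  edge_le_vertex_add_one j := by grind [edgeStage]
  edge_le_vertex_succ j := Nat.le_add_right _ _
  vertex_succ_le j := by grind [vertexStage_succ]
  edge_eq_vertex hT := by simp [edgeStage, IsDescentStart, hT]
  vertex_succ_eq_edge hT hB := by simp [vertexStage_succ, hT, hB]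
  vertex_mod_of_top {j} hT := by
    cases j with
    | zero => rfl
    | succ j => exact (vertexStage_succ_mod hTB h0 j).1 hT
  vertex_mod_of_bottom {j} hB := by
    cases j with
    | zero => exact absurd hB (hTB 0 h0.1)
    | succ j => exact (vertexStage_succ_mod hTB h0 j).2 hB

open Classical in
theorem count_isDescentStart_eq (hTB : ∀ j, T j → ¬ B j) (h0 : IsDescentStart T B 0) (j : ℕ) :
    Nat.count (IsDescentStart T B) j = (vertexStage T B j + 2) / 3 := by
  induction j with
  | zero => simp [vertexStage]
  | succ j ih =>
    have htop : T j → vertexStage T B j % 3 = 0 :=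
      (Staging.ofDescentStart hTB h0).vertex_mod_of_top
    rw [Nat.count_succ, ih, vertexStage_succ, edgeStage]
    grind [IsDescentStart]

open Classical in
theorem exists_staging (hTB : ∀ j, T j → ¬ B j) (h0 : IsDescentStart T B 0) :
    ∃ S : Staging T B, ∀ j, T j → S.vertex j = 3 * Nat.count (IsDescentStart T B) j := by
  refine ⟨.ofDescentStart hTB h0, fun j hT ↦ ?_⟩
  have hmod := (Staging.ofDescentStart hTB h0).vertex_mod_of_top hT
  rw [count_isDescentStart_eq hTB h0]
  change vertexStage T B j % 3 = 0 at hmod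
  change vertexStage T B j = _
  omega

end Stages

/-- The edge `e` of a closed walk of length `n` has the vertex `j` as an endpoint. The edges are
numbered `0, …, n - 1` and the vertices `1, …, n`, so that the edge `0` joins `n` and `1`. -/
def Incident (n e j : ℕ) : Prop := e < n ∧ ((j = e ∧ 0 < j) ∨ j = e + 1 ∨ (e = 0 ∧ j = n))

theorem Incident.pos_and_le {n e j : ℕ} (hI : Incident n e j) : 0 < j ∧ j ≤ n := by
  unfold Incident at hI
  omega

theorem Incident.le_and_le {n e j : ℕ} (hI : Incident n e j) (hj : j ≠ n ∨ e ≠ 0) :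
    e ≤ j ∧ j ≤ e + 1 := by
  unfold Incident at hI
  omega

namespace Staging

variable {T B : ℕ → Prop} (S : Staging T B) {k n e f j l : ℕ}

/-- The column of the edge `e`, which is traversed at the odd time `2 * e + 1`. -/
noncomputable def edgeCol (k e : ℕ) : ℝ := column k (S.edge e) (2 * e + 1)

/-- The abscissa of the vertex `j`, which is reached at the even time `2 * j`. -/
noncomputable def vertexCol (k j : ℕ) : ℝ := column k (S.vertex j) (2 * j)

theorem vertex_mono : Monotone S.vertex :=
  monotone_nat_of_le_succ fun j ↦ (S.vertex_le_edge j).trans (S.edge_le_vertex_succ j)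

theorem vertex_le_edge_of_le (h : j ≤ e) : S.vertex j ≤ S.edge e :=
  (S.vertex_mono h).trans (S.vertex_le_edge e)

theorem edge_le_vertex_of_lt (h : e < j) : S.edge e ≤ S.vertex j :=
  (S.edge_le_vertex_succ e).trans (S.vertex_mono h)

theorem edge_mono : Monotone S.edge :=
  monotone_nat_of_le_succ fun j ↦ (S.edge_le_vertex_succ j).trans (S.vertex_le_edge (j + 1))

theorem edgeCol_lt_iff (h : e < f) :
    S.edgeCol k e < S.edgeCol k f ↔ 3 * k + 2 ≤ S.edge e + S.edge f :=
  column_lt_column_iff (S.edge_mono h.le) (by omega)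

theorem edgeCol_gt_iff (h : e < f) :
    S.edgeCol k f < S.edgeCol k e ↔ S.edge e + S.edge f ≤ 3 * k + 1 :=
  column_gt_column_iff (S.edge_mono h.le) (by omega)

theorem vertexCol_lt_iff (h : j < l) :
    S.vertexCol k j < S.vertexCol k l ↔ 3 * k + 2 ≤ S.vertex j + S.vertex l :=
  column_lt_column_iff (S.vertex_mono h.le) (by omega)

theorem vertexCol_gt_iff (h : j < l) :
    S.vertexCol k l < S.vertexCol k j ↔ S.vertex j + S.vertex l ≤ 3 * k + 1 :=
  column_gt_column_iff (S.vertex_mono h.le) (by omega)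

theorem edgeCol_injective (k : ℕ) : Function.Injective (S.edgeCol k) :=
  .of_lt_imp_ne fun _ _ h ↦ column_ne_column (S.edge_mono h.le) (by omega)

theorem vertexCol_injective (k : ℕ) : Function.Injective (S.vertexCol k) :=
  .of_lt_imp_ne fun _ _ h ↦ column_ne_column (S.vertex_mono h.le) (by omega)

theorem edge_eq_vertex_of_incident (hI : Incident n e j) (hn : T n) (hT : ¬ T j) (hB : ¬ B j) :
    S.edge e = S.vertex j := by
  obtain ⟨-, ⟨rfl, -⟩ | rfl | ⟨-, rfl⟩⟩ := hI
  exacts [S.edge_eq_vertex hT, (S.vertex_succ_eq_edge hT hB).symm, absurd hn hT]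

theorem edgeCol_pass (hI : Incident n e j) (hn : T n) (hT : ¬ T j) (hB : ¬ B j) (hef : e ≠ f) :
    (S.edgeCol k e < S.edgeCol k f → S.vertexCol k j < S.edgeCol k f) ∧
      (S.edgeCol k f < S.edgeCol k e → S.edgeCol k f < S.vertexCol k j) := by
  have hstage := S.edge_eq_vertex_of_incident hI hn hT hB
  have ⟨hej, hje⟩ := hI.le_and_le (.inl fun hjn ↦ hT (hjn ▸ hn))
  obtain hlt | hlt := hef.lt_or_gt
  · have hle := S.edge_mono hlt.le
    rw [S.edgeCol_lt_iff hlt, S.edgeCol_gt_iff hlt, vertexCol, edgeCol,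
      column_lt_column_iff (hstage ▸ hle) (by omega),
      column_gt_column_iff (hstage ▸ hle) (by omega), hstage]
    exact ⟨id, id⟩
  · have hle := S.edge_mono hlt.le
    rw [S.edgeCol_lt_iff hlt, S.edgeCol_gt_iff hlt, vertexCol, edgeCol,
      column_gt_column_iff (hstage ▸ hle) (by omega),
      column_lt_column_iff (hstage ▸ hle) (by omega), hstage]
    exact ⟨id, id⟩

theorem stage_of_incident_bottom (hI : Incident n e j) (hn : T n) (hT : ¬ T j) (hB : B j) :
    S.vertex j % 3 = 2 ∧ S.edge e ≤ S.vertex j ∧ S.vertex j ≤ S.edge e + 1 := by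
  refine ⟨S.vertex_mod_of_bottom hB, ?_⟩
  obtain ⟨-, ⟨rfl, -⟩ | rfl | ⟨-, rfl⟩⟩ := hI
  · simp [S.edge_eq_vertex hT]
  · exact ⟨S.edge_le_vertex_succ e, S.vertex_succ_le e⟩
  · exact absurd hn hT

theorem vertexCol_lt_of_edgeCol_lt (hI : Incident n e j) (hI' : Incident n f l) (hn : T n)
    (hTj : ¬ T j) (hTl : ¬ T l) (hB : B j ↔ B l) (hjl : j ≠ l)
    (hlt : S.edgeCol k e < S.edgeCol k f) : S.vertexCol k j < S.vertexCol k l := by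
  have ⟨hej, hje⟩ := hI.le_and_le (.inl fun hjn ↦ hTj (hjn ▸ hn))
  have ⟨hfl, hlf⟩ := hI'.le_and_le (.inl fun hln ↦ hTl (hln ▸ hn))
  have hef : e ≠ f := fun h ↦ hlt.ne (by rw [h])
  have hsums : (3 * k + 2 ≤ S.edge e + S.edge f → 3 * k + 2 ≤ S.vertex j + S.vertex l) ∧
      (S.edge e + S.edge f ≤ 3 * k + 1 → S.vertex j + S.vertex l ≤ 3 * k + 1) := by
    by_cases hBj : B j
    · have := S.stage_of_incident_bottom hI hn hTj hBj
      have := S.stage_of_incident_bottom hI' hn hTl (hB.1 hBj)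
      omega
    · rw [S.edge_eq_vertex_of_incident hI hn hTj hBj,
        S.edge_eq_vertex_of_incident hI' hn hTl (hB.not.1 hBj)]
      exact ⟨id, id⟩
  obtain h | h := hef.lt_or_gt
  · rw [S.vertexCol_lt_iff (by omega)]
    exact hsums.1 ((S.edgeCol_lt_iff h).1 hlt)
  · rw [S.vertexCol_gt_iff (by omega), add_comm]
    exact hsums.2 (add_comm (S.edge f) _ ▸ (S.edgeCol_gt_iff h).1 hlt)

theorem stage_of_incident_top (hI : Incident n e j) (hwrap : j ≠ n ∨ e ≠ 0) (hT : T j) :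
    S.vertex j % 3 = 0 ∧ S.edge e ≤ S.vertex j + 1 ∧ S.vertex j ≤ S.edge e + 1 := by
  refine ⟨S.vertex_mod_of_top hT, ?_⟩
  obtain ⟨-, ⟨rfl, -⟩ | rfl | ⟨rfl, rfl⟩⟩ := hI
  · exact ⟨S.edge_le_vertex_add_one j, (S.vertex_le_edge j).trans (Nat.le_succ _)⟩
  · exact ⟨(S.edge_le_vertex_succ e).trans (Nat.le_succ _), S.vertex_succ_le e⟩
  · simp at hwrap

/-- The edge `e` touches the top level. -/
def Touches (T : ℕ → Prop) (e : ℕ) : Prop := T e ∨ T (e + 1)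

/-- The edges `e` and `f` are in mirrored stages, both descending or both ascending, such that the
order of their columns differs from the order of their endpoints on the top level. -/
def Critical (k e f : ℕ) : Prop :=
  (S.edge e % 3 = 1 ∧ S.edge e + S.edge f = 3 * k + 2) ∨
    (S.edge e % 3 = 2 ∧ S.edge e + S.edge f = 3 * k + 1)

theorem Critical.symm {S : Staging T B} (h : S.Critical k e f) : S.Critical k f e := by
  unfold Critical at *
  omega

theorem top_zero (S : Staging T B) : T 0 := by
  by_contra hT
  have := S.edge_eq_vertex hT
  rw [S.edge_zero, S.vertex_zero] at this
  exact one_ne_zero this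

theorem touches_of_incident (S : Staging T B) (hI : Incident n e j) (hT : T j) : Touches T e := by
  obtain ⟨-, ⟨rfl, -⟩ | rfl | ⟨rfl, -⟩⟩ := hI
  exacts [.inl hT, .inr hT, .inl S.top_zero]

theorem edge_ne_zero_of_inverted (hk : S.vertex n = 3 * k) (hf : f < n)
    (hlt : S.edgeCol k e < S.edgeCol k f) : e ≠ 0 := by
  rintro rfl
  have hf0 : 0 < f := Nat.pos_of_ne_zero fun hf0 ↦ hlt.ne (by rw [hf0])
  have hsum := (S.edgeCol_lt_iff hf0).1 hlt
  have := S.edge_le_vertex_of_lt hf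
  rw [S.edge_zero] at hsum
  omega

theorem vertex_ne_of_inverted (hk : S.vertex n = 3 * k) (hj : 0 < j) (hjn : j ≤ n) (hT : T j)
    (hlt : S.vertexCol k l < S.vertexCol k j) : l ≠ n := by
  rintro rfl
  have hsum := (S.vertexCol_gt_iff (hjn.lt_of_ne fun hjl ↦ hlt.ne (by rw [hjl]))).1 hlt
  have := S.edge_zero ▸ S.edge_le_vertex_of_lt hj
  have := S.vertex_mod_of_top hT
  omega

theorem critical_of_inverted (hk : S.vertex n = 3 * k) (hI : Incident n e j)
    (hI' : Incident n f l) (hTj : T j) (hTl : T l) (hlt : S.edgeCol k e < S.edgeCol k f)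
    (hgt : S.vertexCol k l < S.vertexCol k j) : S.Critical k e f := by
  have hj : j ≠ n ∨ e ≠ 0 := .inr (S.edge_ne_zero_of_inverted hk hI'.1 hlt)
  have hl : l ≠ n ∨ f ≠ 0 :=
    .inl (S.vertex_ne_of_inverted hk hI.pos_and_le.1 hI.pos_and_le.2 hTj hgt)
  have hje := S.stage_of_incident_top hI hj hTj
  have hlf := S.stage_of_incident_top hI' hl hTl
  have ⟨_, _⟩ := hI.le_and_le hj
  have ⟨_, _⟩ := hI'.le_and_le hl
  have hef : e ≠ f := fun h ↦ hlt.ne (by rw [h])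
  have hjl : j ≠ l := fun h ↦ hgt.ne (by rw [h])
  unfold Critical
  obtain h | h := hef.lt_or_gt
  · have := (S.edgeCol_lt_iff h).1 hlt
    have := (S.vertexCol_gt_iff (by omega)).1 hgt
    omega
  · have := (S.edgeCol_gt_iff h).1 hlt
    have := (S.vertexCol_lt_iff (by omega)).1 hgt
    omega

theorem top_of_edge_mod_one (ht : Touches T e) (hmod : S.edge e % 3 = 1) :
    T e ∧ S.vertex e + 1 = S.edge e := by
  obtain hT | hT := ht
  · have := S.vertex_mod_of_top hT
    have := S.vertex_le_edge e
    have := S.edge_le_vertex_add_one e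
    exact ⟨hT, by omega⟩
  · have := S.vertex_mod_of_top hT
    have := S.edge_le_vertex_succ e
    have := S.vertex_succ_le e
    omega

theorem top_of_edge_mod_two (ht : Touches T e) (hmod : S.edge e % 3 = 2) :
    T (e + 1) ∧ S.vertex (e + 1) = S.edge e + 1 := by
  obtain hT | hT := ht
  · have := S.vertex_mod_of_top hT
    have := S.vertex_le_edge e
    have := S.edge_le_vertex_add_one e
    omega
  · have := S.vertex_mod_of_top hT
    have := S.edge_le_vertex_succ e
    have := S.vertex_succ_le e
    exact ⟨hT, by omega⟩

/-- Two descending edges are inverted at their upper endpoints, where the sum of the stages is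
smaller by two; two ascending ones in the opposite order, since there the sum is larger by two. -/
theorem inverted_of_critical (hk : S.vertex n = 3 * k) (hef : e < f) (hf : f < n)
    (hte : Touches T e) (htf : Touches T f) (hc : S.Critical k e f) :
    ∃ e' f' j l, s(e', f') = s(e, f) ∧ Incident n e' j ∧ Incident n f' l ∧ T j ∧ T l ∧
      S.edgeCol k e' < S.edgeCol k f' ∧ S.vertexCol k l < S.vertexCol k j := by
  obtain ⟨hmod, hsum⟩ | ⟨hmod, hsum⟩ := hc
  · obtain ⟨hTe, hve⟩ := S.top_of_edge_mod_one hte hmod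
    obtain ⟨hTf, hvf⟩ := S.top_of_edge_mod_one htf (by omega)
    have he : 0 < e := by
      refine Nat.pos_of_ne_zero ?_
      rintro rfl
      have := S.edge_zero
      have := S.edge_le_vertex_of_lt hf
      omega
    exact ⟨e, f, e, f, rfl, ⟨by omega, .inl ⟨rfl, he⟩⟩, ⟨hf, .inl ⟨rfl, by omega⟩⟩, hTe, hTf,
      (S.edgeCol_lt_iff hef).2 (by omega), (S.vertexCol_gt_iff hef).2 (by omega)⟩
  · obtain ⟨hTe, hve⟩ := S.top_of_edge_mod_two hte hmod
    obtain ⟨hTf, hvf⟩ := S.top_of_edge_mod_two htf (by omega)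
    exact ⟨f, e, f + 1, e + 1, Sym2.eq_swap, ⟨hf, .inr (.inl rfl)⟩, ⟨by omega, .inr (.inl rfl)⟩,
      hTf, hTe, (S.edgeCol_gt_iff hef).2 (by omega),
      (S.vertexCol_lt_iff (by omega)).2 (by omega)⟩

theorem touching_edge_unique (hte : Touches T e) (htf : Touches T f)
    (hmod : S.edge e % 3 ≠ 0) (hef : S.edge e = S.edge f) : e = f := by
  wlog hlt : e < f generalizing e f
  · obtain rfl | hgt := (not_lt.1 hlt).eq_or_lt
    · rfl
    · exact (this htf hte (hef ▸ hmod) hef.symm hgt).symm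
  obtain h | h : S.edge e % 3 = 1 ∨ S.edge e % 3 = 2 := by omega
  · have := (S.top_of_edge_mod_one htf (hef ▸ h)).2
    have := S.edge_le_vertex_of_lt hlt
    omega
  · have := (S.top_of_edge_mod_two hte h).2
    have := S.vertex_le_edge_of_le (j := e + 1) hlt
    omega

theorem exists_touching_edge_mod_one {s : ℕ} (hmod : s % 3 = 1) (hs : s < S.vertex n) :
    ∃ e < n, Touches T e ∧ S.edge e = s := by
  classical
  obtain ⟨j, hj, hmin⟩ := Nat.findX (⟨n, hs.le.trans (S.vertex_le_edge n)⟩ : ∃ j, s ≤ S.edge j)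
  cases j with
  | zero =>
    have := S.edge_zero
    refine ⟨0, Nat.pos_of_ne_zero ?_, .inl S.top_zero, by omega⟩
    rintro rfl
    simp [S.vertex_zero] at hs
  | succ i =>
    have hi : S.edge i < s := not_le.1 (hmin i i.lt_succ_self)
    have hin : i + 1 < n := by
      by_contra hni
      have := S.vertex_mono (not_lt.1 hni)
      have := S.vertex_succ_le i
      omega
    have hle := S.vertex_succ_le i
    have hT : T (i + 1) := by
      by_contra hT
      have := S.edge_eq_vertex hT
      by_cases hB : B (i + 1)
      · have := S.vertex_mod_of_bottom hB
        omega
      · have := S.vertex_succ_eq_edge hT hB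
        omega
    have := S.vertex_mod_of_top hT
    have := S.edge_le_vertex_add_one (i + 1)
    exact ⟨i + 1, hin, .inl hT, by omega⟩

theorem exists_touching_edge_mod_two {s : ℕ} (hmod : s % 3 = 2) (hs : s < S.vertex n) :
    ∃ e < n, Touches T e ∧ S.edge e = s := by
  classical
  obtain ⟨j, hj, hmin⟩ := Nat.findX (⟨n, hs⟩ : ∃ j, s < S.vertex j)
  cases j with
  | zero => simp [S.vertex_zero] at hj
  | succ i =>
    have hi : S.vertex i ≤ s := not_lt.1 (hmin i i.lt_succ_self)
    have hin : i < n := not_le.1 fun hni ↦ hs.not_ge ((S.vertex_mono hni).trans hi)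
    have hedge : S.edge i ≤ s := by
      by_contra hlt
      have := S.edge_le_vertex_add_one i
      by_cases hT : T i
      · have := S.vertex_mod_of_top hT
        omega
      · have := S.edge_eq_vertex hT
        omega
    have := S.vertex_succ_le i
    have hT : T (i + 1) := by
      by_contra hT
      by_cases hB : B (i + 1)
      · have := S.vertex_mod_of_bottom hB
        omega
      · have := S.vertex_succ_eq_edge hT hB
        omega
    exact ⟨i, hin, .inr hT, by omega⟩

theorem exists_touching_edge {s : ℕ} (hmod : s % 3 ≠ 0) (hs : s < S.vertex n) :
    ∃ e < n, Touches T e ∧ S.edge e = s := by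
  obtain h | h : s % 3 = 1 ∨ s % 3 = 2 := by omega
  exacts [S.exists_touching_edge_mod_one h hs, S.exists_touching_edge_mod_two h hs]

/-- The pairs of edges that cross near the top level in the folded drawing. -/
def criticalPairs (k n : ℕ) : Set (ℕ × ℕ) :=
  {p | p.1 < p.2 ∧ p.2 < n ∧ Touches T p.1 ∧ Touches T p.2 ∧ S.Critical k p.1 p.2}

theorem exists_mem_criticalPairs {i : ℕ} (hk : S.vertex n = 3 * k) (hi : i < k - 1) :
    ∃ p ∈ S.criticalPairs k n, S.edge p.1 = (3 * i + 5) / 2 := by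
  obtain ⟨e, -, hte, he⟩ :=
    S.exists_touching_edge (n := n) (s := (3 * i + 5) / 2) (by omega) (by omega)
  obtain ⟨f, hf, htf, hf'⟩ :=
    S.exists_touching_edge (n := n) (s := 3 * k - 1 - 3 * i / 2) (by omega) (by omega)
  have hef : e < f := S.edge_mono.reflect_lt (by omega)
  refine ⟨(e, f), ⟨hef, hf, hte, htf, ?_⟩, he⟩
  simp only [Critical]
  obtain ⟨a, rfl | rfl⟩ := i.even_or_odd' <;> omega

/-- The smaller stage of a critical pair is `3 * a + 1` with `0 < a`, which is sent to `2 * a - 1`,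
or `3 * a + 2`, which is sent to `2 * a`. -/
theorem encard_criticalPairs (hk : S.vertex n = 3 * k) :
    (S.criticalPairs k n).encard = ((k - 1 : ℕ) : ℕ∞) := by
  have hbij : Set.BijOn (fun p ↦ (2 * S.edge p.1 - 4) / 3) (S.criticalPairs k n)
      (Finset.range (k - 1)) := by
    have hstages : ∀ p ∈ S.criticalPairs k n, S.edge p.1 ≤ S.edge p.2 ∧ S.edge p.2 ≤ 3 * k :=
      fun p hp ↦ ⟨S.edge_mono hp.1.le, hk ▸ S.edge_le_vertex_of_lt hp.2.1⟩
    refine .mk ?_ ?_ ?_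
    · intro p hp
      have := hstages p hp
      obtain ⟨hlt, -, h1, h2, hc⟩ := hp
      have := S.touching_edge_unique h1 h2
      simp only [Critical] at hc
      simp only [Finset.coe_range, Set.mem_Iio]
      omega
    · intro p hp q hq hpq
      have := hstages p hp
      have := hstages q hq
      obtain ⟨-, -, h1, h2, hc⟩ := hp
      obtain ⟨-, -, h1', h2', hc'⟩ := hq
      simp only [Critical] at hc hc'
      simp only at hpq
      exact Prod.ext (S.touching_edge_unique h1 h1' (by omega) (by omega))
        (S.touching_edge_unique h2 h2' (by omega) (by omega))
    · intro i hi
      simp only [Finset.coe_range, Set.mem_Iio] at hi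
      obtain ⟨p, hp, hstage⟩ := S.exists_mem_criticalPairs hk hi
      exact ⟨p, hp, by simp only [hstage]; omega⟩
  rw [← hbij.injOn.encard_image, hbij.image_eq, Set.encard_coe_eq_coe_finsetCard,
    Finset.card_range]

end Staging

/-- The sequence `u` runs through a cycle of length `n` periodically, so that the edges of `G` are
the pairs of consecutive terms. -/
structure IsTraversal {V : Type*} (G : SimpleGraph V) (n : ℕ) (u : ℕ → V) : Prop where
  eq_iff (i j : ℕ) : u i = u j ↔ i ≡ j [MOD n]
  surjective : Function.Surjective u
  adj_iff (v w : V) : G.Adj v w ↔ ∃ j, s(v, w) = s(u j, u (j + 1))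

theorem IsCycleEnum.isTraversal {V : Type*} {G : SimpleGraph V} {n : ℕ} {e : Fin n ≃ V}
    (hcyc : IsCycleEnum G e) (hn : 0 < n) : IsTraversal G n (cycVert hn e) where
  eq_iff i j := by simp [cycVert, Nat.ModEq]
  surjective v := ⟨(e.symm v).val, by simp [cycVert, Nat.mod_eq_of_lt]⟩
  adj_iff v w := by
    obtain ⟨i, rfl⟩ := e.surjective v
    obtain ⟨j, rfl⟩ := e.surjective w
    rw [hcyc]
    constructor
    · rintro (h | h)
      · exact ⟨i, by simp [cycVert, Nat.mod_eq_of_lt, h]⟩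
      · exact ⟨j, by simp [cycVert, Nat.mod_eq_of_lt, h]⟩
    · rintro ⟨m, hm⟩
      have hstep : (m % n + 1) % n = (m + 1) % n := Nat.mod_add_mod m n 1
      obtain ⟨hi, hj⟩ | ⟨hi, hj⟩ := Sym2.eq_iff.1 hm
      · rw [e.injective hi, e.injective hj]
        exact .inl hstep
      · rw [e.injective hi, e.injective hj]
        exact .inr hstep

namespace IsTraversal

variable {V : Type*} {G : SimpleGraph V} {n : ℕ} {u : ℕ → V} {e f j : ℕ} {v w : V}

theorem periodic (hu : IsTraversal G n u) : Function.Periodic u n := fun j ↦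
  (hu.eq_iff _ _).2 (by simp [Nat.ModEq])

theorem exists_add_modEq (hn : 0 < n) (r i : ℕ) : ∃ j, r + j ≡ i [MOD n] := by
  obtain ⟨n, rfl⟩ := Nat.exists_eq_add_of_lt hn
  exact ⟨i + r * n, by simp [Nat.ModEq, show r + (i + r * n) = i + r * (n + 1) by ring]⟩

theorem shift (hu : IsTraversal G n u) (hn : 0 < n) (r : ℕ) :
    IsTraversal G n fun j ↦ u (r + j) where
  eq_iff i j := (hu.eq_iff _ _).trans ⟨.add_left_cancel' r, .add_left r⟩
  surjective v := by
    obtain ⟨i, rfl⟩ := hu.surjective v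
    obtain ⟨j, hj⟩ := exists_add_modEq hn r i
    exact ⟨j, (hu.eq_iff _ _).2 hj⟩
  adj_iff v w := by
    rw [hu.adj_iff]
    refine ⟨fun ⟨i, hi⟩ ↦ ?_, fun ⟨j, hj⟩ ↦ ⟨r + j, hj⟩⟩
    obtain ⟨j, hj⟩ := exists_add_modEq hn r i
    exact ⟨j, by rw [hi, (hu.eq_iff _ _).2 hj, ← add_assoc, (hu.eq_iff _ _).2 (hj.add_right 1)]⟩

/-- The edge of a traversal `u` that is passed after the vertex `u j`. -/
def walkEdge (u : ℕ → V) (j : ℕ) : Sym2 V := s(u j, u (j + 1))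

theorem walkEdge_mem (hu : IsTraversal G n u) (j : ℕ) : walkEdge u j ∈ G.edgeSet :=
  (hu.adj_iff _ _).2 ⟨j, rfl⟩

theorem walkEdge_mod (hu : IsTraversal G n u) (j : ℕ) : walkEdge u (j % n) = walkEdge u j := by
  have : Function.Periodic (walkEdge u) n := fun i ↦ by
    rw [walkEdge, walkEdge, add_right_comm, hu.periodic, hu.periodic]
  exact this.map_mod_nat j

theorem injOn_Ioc (hu : IsTraversal G n u) : Set.InjOn u (Set.Ioc 0 n) := fun i hi j hj hij ↦ by
  obtain ⟨i, rfl⟩ := Nat.exists_eq_add_one.2 hi.1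
  obtain ⟨j, rfl⟩ := Nat.exists_eq_add_one.2 hj.1
  rw [((hu.eq_iff _ _).1 hij).add_right_cancel' 1 |>.eq_of_lt_of_lt hi.2 hj.2]

theorem injOn_walkEdge (hu : IsTraversal G n u) (hn : 3 ≤ n) :
    Set.InjOn (walkEdge u) (Set.Iio n) := fun i hi j hj hij ↦ by
  obtain ⟨h, -⟩ | ⟨h, h'⟩ := Sym2.eq_iff.1 hij
  · exact ((hu.eq_iff _ _).1 h).eq_of_lt_of_lt hi hj
  · have hmod : j + 2 ≡ j + 0 [MOD n] :=
      (((hu.eq_iff _ _).1 h).symm.add_right 1).trans ((hu.eq_iff _ _).1 h')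
    have hdvd : n ∣ 2 := (Nat.modEq_zero_iff_dvd).1 (hmod.add_left_cancel' j)
    have := Nat.le_of_dvd two_pos hdvd
    omega

theorem exists_mem_Ioc (hu : IsTraversal G n u) (hn : 0 < n) (v : V) :
    ∃ j ∈ Set.Ioc 0 n, u j = v := by
  obtain ⟨i, rfl⟩ := hu.surjective v
  obtain h | h := (i % n).eq_zero_or_pos
  · exact ⟨n, ⟨hn, le_rfl⟩, (hu.eq_iff _ _).2 (by simp [Nat.ModEq, h])⟩
  · exact ⟨i % n, ⟨h, (i.mod_lt hn).le⟩, (hu.eq_iff _ _).2 (i.mod_modEq n)⟩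

theorem exists_incident (hu : IsTraversal G n u) (hn : 0 < n) (hvw : G.Adj v w) :
    ∃ e j, Incident n e j ∧ u j = v ∧ walkEdge u e = s(v, w) := by
  obtain ⟨i, hi⟩ := (hu.adj_iff v w).1 hvw
  obtain ⟨e, he, hedge⟩ : ∃ e < n, walkEdge u e = s(v, w) :=
    ⟨i % n, i.mod_lt hn, (hu.walkEdge_mod i).trans hi.symm⟩
  obtain ⟨rfl, -⟩ | ⟨-, rfl⟩ := Sym2.eq_iff.1 hedge
  · obtain rfl | he0 := e.eq_zero_or_pos
    · exact ⟨0, n, ⟨hn, .inr (.inr ⟨rfl, rfl⟩)⟩, hu.periodic.eq, hedge⟩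
    · exact ⟨e, e, ⟨he, .inl ⟨rfl, he0⟩⟩, rfl, hedge⟩
  · exact ⟨e, e + 1, ⟨he, .inr (.inl rfl)⟩, rfl, hedge⟩

theorem exists_walkEdge_eq (hu : IsTraversal G n u) (hI : Incident n e j) :
    ∃ w, s(u j, w) = walkEdge u e := by
  obtain ⟨-, ⟨rfl, -⟩ | rfl | ⟨rfl, rfl⟩⟩ := hI
  · exact ⟨_, rfl⟩
  · exact ⟨_, Sym2.eq_swap⟩
  · exact ⟨u 1, by rw [walkEdge, ← hu.periodic 0, zero_add, zero_add]⟩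

/-- The position in `0, …, n - 1` at which a traversal passes an edge. -/
noncomputable def edgeIndex (n : ℕ) (u : ℕ → V) : Sym2 V → ℕ :=
  Function.invFunOn (walkEdge u) (Set.Iio n)

/-- The position in `1, …, n` at which a traversal visits a vertex. -/
noncomputable def vertexIndex (n : ℕ) (u : ℕ → V) : V → ℕ :=
  Function.invFunOn u (Set.Ioc 0 n)

theorem edgeIndex_walkEdge (hu : IsTraversal G n u) (hn : 3 ≤ n) (he : e < n) :
    edgeIndex n u (walkEdge u e) = e :=
  (hu.injOn_walkEdge hn).leftInvOn_invFunOn he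

theorem vertexIndex_apply (hu : IsTraversal G n u) (hj : j ∈ Set.Ioc 0 n) :
    vertexIndex n u (u j) = j :=
  hu.injOn_Ioc.leftInvOn_invFunOn hj

end IsTraversal

section FoldedLayout

variable {V : Type*} {G : SimpleGraph V} {h : V → ℝ} {n k : ℕ} {u : ℕ → V} {t b : ℝ}
  (hu : IsTraversal G n u) (S : Staging (fun j ↦ h (u j) = t) fun j ↦ h (u j) = b)

open IsTraversal

/-- The layout of a cycle that is traversed by `u`, with the columns and abscissas obtained by
folding a staging of the traversal. -/
noncomputable def IsTraversal.foldedLayout (hn : 3 ≤ n) (ht : ∀ v, h v ≤ t) (hb : ∀ v, b ≤ h v)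
    (k : ℕ) : ColumnLayout G h t where
  col q := S.edgeCol k (edgeIndex n u q)
  x v := S.vertexCol k (vertexIndex n u v)
  col_injOn := by
    refine (S.edgeCol_injective k).comp_injOn fun q hq q' hq' heq ↦ ?_
    induction q with | _ v w
    induction q' with | _ v' w'
    obtain ⟨e, j, hI, -, he⟩ := hu.exists_incident (Nat.zero_lt_of_lt hn) hq
    obtain ⟨f, l, hI', -, hf⟩ := hu.exists_incident (Nat.zero_lt_of_lt hn) hq'
    rw [← he, ← hf, hu.edgeIndex_walkEdge hn hI.1, hu.edgeIndex_walkEdge hn hI'.1] at heq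
    rw [← he, ← hf, heq]
  x_inj v w _ hx := by
    obtain ⟨j, hj, rfl⟩ := hu.exists_mem_Ioc (Nat.zero_lt_of_lt hn) v
    obtain ⟨l, hl, rfl⟩ := hu.exists_mem_Ioc (Nat.zero_lt_of_lt hn) w
    rw [hu.vertexIndex_apply hj, hu.vertexIndex_apply hl] at hx
    rw [S.vertexCol_injective k hx]
  pass v w v' w' hvw hvw' hmem := by
    have htn : h (u n) = t := hu.periodic.eq ▸ S.top_zero
    obtain ⟨e, j, hI, rfl, he⟩ := hu.exists_incident (Nat.zero_lt_of_lt hn) hvw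
    obtain ⟨f, l, hI', -, hf⟩ := hu.exists_incident (Nat.zero_lt_of_lt hn) hvw'
    have hef : e ≠ f := by
      rintro rfl
      obtain ⟨h', -⟩ | ⟨h', -⟩ := Sym2.eq_iff.1 (he.symm.trans hf) <;> simp [h'] at hmem
    rw [← he, ← hf, hu.edgeIndex_walkEdge hn hI.1, hu.edgeIndex_walkEdge hn hI'.1,
      hu.vertexIndex_apply hI.pos_and_le]
    exact S.edgeCol_pass hI htn (hmem.2.trans_le (sup_le (ht v') (ht w'))).ne
      ((le_inf (hb v') (hb w')).trans_lt hmem.1).ne' hef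
  level v w v' w' hvw hvw' hvv' hheight hvt hlt := by
    have htn : h (u n) = t := hu.periodic.eq ▸ S.top_zero
    obtain ⟨e, j, hI, rfl, he⟩ := hu.exists_incident (Nat.zero_lt_of_lt hn) hvw
    obtain ⟨f, l, hI', rfl, hf⟩ := hu.exists_incident (Nat.zero_lt_of_lt hn) hvw'
    rw [← he, ← hf, hu.edgeIndex_walkEdge hn hI.1, hu.edgeIndex_walkEdge hn hI'.1] at hlt
    rw [hu.vertexIndex_apply hI.pos_and_le, hu.vertexIndex_apply hI'.pos_and_le]
    exact S.vertexCol_lt_of_edgeCol_lt hI hI' htn hvt (hheight ▸ hvt) (by simp only [hheight])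
      (ne_of_apply_ne u hvv') hlt

variable {hu S} (hn : 3 ≤ n) (ht : ∀ v, h v ≤ t) (hb : ∀ v, b ≤ h v)

theorem foldedLayout_col_walkEdge {e : ℕ} (he : e < n) :
    (hu.foldedLayout S hn ht hb k).col (walkEdge u e) = S.edgeCol k e :=
  congrArg (S.edgeCol k) (hu.edgeIndex_walkEdge hn he)

theorem foldedLayout_x_apply {j : ℕ} (hj : j ∈ Ioc 0 n) :
    (hu.foldedLayout S hn ht hb k).x (u j) = S.vertexCol k j :=
  congrArg (S.vertexCol k) (hu.vertexIndex_apply hj)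

theorem exists_mem_criticalPairs_of_inverted {v w v' w' : V} (hk : S.vertex n = 3 * k)
    (hinv : (hu.foldedLayout S hn ht hb k).Inverted v w v' w') :
    ∃ p ∈ S.criticalPairs k n, s(walkEdge u p.1, walkEdge u p.2) = s(s(v, w), s(v', w')) := by
  obtain ⟨hvw, hvw', hvt, hvt', hlt, hx⟩ := hinv
  obtain ⟨e, j, hI, rfl, he⟩ := hu.exists_incident (Nat.zero_lt_of_lt hn) hvw
  obtain ⟨f, l, hI', rfl, hf⟩ := hu.exists_incident (Nat.zero_lt_of_lt hn) hvw'
  rw [← he, ← hf, foldedLayout_col_walkEdge hn ht hb hI.1,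
    foldedLayout_col_walkEdge hn ht hb hI'.1] at hlt
  rw [foldedLayout_x_apply hn ht hb hI.pos_and_le,
    foldedLayout_x_apply hn ht hb hI'.pos_and_le] at hx
  have hc := S.critical_of_inverted hk hI hI' hvt hvt' hlt hx
  have hte := S.touches_of_incident hI hvt
  have htf := S.touches_of_incident hI' hvt'
  have hef : e ≠ f := fun h ↦ hlt.ne (by rw [h])
  obtain hef | hfe := hef.lt_or_gt
  · exact ⟨(e, f), ⟨hef, hI'.1, hte, htf, hc⟩, by simp only [he, hf]⟩
  · exact ⟨(f, e), ⟨hfe, hI.1, htf, hte, hc.symm⟩, by simp only [he, hf, Sym2.eq_swap]⟩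

theorem mem_invertedPairs_of_mem_criticalPairs {p : ℕ × ℕ} (hk : S.vertex n = 3 * k)
    (hp : p ∈ S.criticalPairs k n) :
    s(walkEdge u p.1, walkEdge u p.2) ∈ (hu.foldedLayout S hn ht hb k).invertedPairs := by
  obtain ⟨hef, hf, hte, htf, hc⟩ := hp
  obtain ⟨e, f, j, l, heq, hI, hI', hTj, hTl, hcol, hx⟩ :=
    S.inverted_of_critical hk hef hf hte htf hc
  obtain ⟨w, hw⟩ := hu.exists_walkEdge_eq hI
  obtain ⟨w', hw'⟩ := hu.exists_walkEdge_eq hI'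
  refine ⟨u j, w, u l, w', ?_, ?_⟩
  · rw [hw, hw']
    exact congrArg (Sym2.map (walkEdge u)) heq.symm
  · constructor
    · exact G.mem_edgeSet.1 (hw ▸ hu.walkEdge_mem e)
    · exact G.mem_edgeSet.1 (hw' ▸ hu.walkEdge_mem f)
    · exact hTj
    · exact hTl
    · rwa [hw, hw', foldedLayout_col_walkEdge hn ht hb hI.1,
        foldedLayout_col_walkEdge hn ht hb hI'.1]
    · rwa [foldedLayout_x_apply hn ht hb hI.pos_and_le,
        foldedLayout_x_apply hn ht hb hI'.pos_and_le]

theorem invertedPairs_foldedLayout (hk : S.vertex n = 3 * k) :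
    (hu.foldedLayout S hn ht hb k).invertedPairs =
      (fun p ↦ s(walkEdge u p.1, walkEdge u p.2)) '' S.criticalPairs k n := by
  ext q
  constructor
  · rintro ⟨v, w, v', w', rfl, hinv⟩
    exact exists_mem_criticalPairs_of_inverted hn ht hb hk hinv
  · rintro ⟨p, hp, rfl⟩
    exact mem_invertedPairs_of_mem_criticalPairs hn ht hb hk hp

theorem encard_invertedPairs_foldedLayout (hk : S.vertex n = 3 * k) :
    (hu.foldedLayout S hn ht hb k).invertedPairs.encard = ((k - 1 : ℕ) : ℕ∞) := by
  rw [invertedPairs_foldedLayout hn ht hb hk, InjOn.encard_image, S.encard_criticalPairs hk]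
  rintro ⟨e, f⟩ ⟨hef, hf, -⟩ ⟨e', f'⟩ ⟨hef', hf', -⟩ heq
  simp only at hef hf hef' hf'
  have hinj := hu.injOn_walkEdge hn
  obtain ⟨h₁, h₂⟩ | ⟨h₁, h₂⟩ := Sym2.eq_iff.1 heq
  · rw [hinj (hef.trans hf) (hef'.trans hf') h₁, hinj hf hf' h₂]
  · have := hinj (hef.trans hf) hf' h₁
    have := hinj hf (hef'.trans hf') h₂
    omega

end FoldedLayout

section CountDescents

variable {T B : ℕ → Prop} {n : ℕ}

theorem isDescentStart_add_iff (r j : ℕ) : IsDescentStart T B (r + j) ↔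
    IsDescentStart (fun i ↦ T (r + i)) (fun i ↦ B (r + i)) j := by
  simp only [IsDescentStart, BottomNext, add_assoc]

theorem periodic_isDescentStart (hT : Function.Periodic T n) (hB : Function.Periodic B n) :
    Function.Periodic (IsDescentStart T B) n := fun j ↦ by
  simp only [IsDescentStart, BottomNext, add_right_comm j n, hT _, hB _]

theorem isDescentStart_iff_exists_le (hB : Function.Periodic B n) (hn : 0 < n) (j : ℕ) :
    IsDescentStart T B j ↔ T j ∧ ∃ d, 0 < d ∧ d ≤ n ∧ B (j + d) ∧
      ∀ d', 0 < d' → d' < d → ¬ T (j + d') ∧ ¬ B (j + d') := by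
  refine and_congr_right fun _ ↦ exists_congr fun d ↦ and_congr_right fun _ ↦
    ⟨fun ⟨hBd, hmin⟩ ↦ ⟨not_lt.1 fun hnd ↦ ?_, hBd, hmin⟩, And.right⟩
  refine (hmin (d - n) (by omega) (by omega)).2 ?_
  rwa [← hB, add_assoc, Nat.sub_add_cancel hnd.le]

open Classical in
theorem count_add_of_periodic {p : ℕ → Prop} (hp : Function.Periodic p n) (r : ℕ) :
    Nat.count (fun j ↦ p (r + j)) n = Nat.count p n := by
  have hcount : Nat.count (fun j ↦ p (n + j)) r = Nat.count p r := by
    congr! 1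
    exact funext fun j ↦ by rw [add_comm, hp]
  have h := Nat.count_add p r n
  rw [add_comm r n, Nat.count_add, hcount] at h
  omega

open Classical in
theorem ncard_fin_eq_count (p : ℕ → Prop) : {i : Fin n | p i}.ncard = Nat.count p n := by
  rw [Nat.count_eq_card_filter_range, ← Set.ncard_coe_finset,
    ← Set.ncard_image_of_injective _ Fin.val_injective]
  congr 1
  ext j
  simp [Fin.exists_iff, and_comm]

end CountDescents

section Drawing

variable {V : Type*} {G : SimpleGraph V} {h : V → ℝ} {n : ℕ} {u : ℕ → V} {t b : ℝ}

namespace IsTraversal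

theorem top_ne_bottom (hu : IsTraversal G n u) (hne : ∀ v w : V, G.Adj v w → h v ≠ h w)
    (ht : ∀ v, h v ≤ t) (hb : ∀ v, b ≤ h v) : t ≠ b := by
  rintro rfl
  have hconst : ∀ v, h v = t := fun v ↦ (ht v).antisymm (hb v)
  exact hne _ _ (G.mem_edgeSet.1 (hu.walkEdge_mem 0)) (by rw [hconst, hconst])

theorem exists_isDescentStart (hu : IsTraversal G n u) (hn : 0 < n) (htb : t ≠ b)
    (ht : ∃ v, h v = t) (hb : ∃ v, h v = b) :
    ∃ r, IsDescentStart (fun j ↦ h (u j) = t) (fun j ↦ h (u j) = b) r := by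
  obtain ⟨v, hv⟩ := ht
  obtain ⟨w, hw⟩ := hb
  obtain ⟨i, rfl⟩ := hu.surjective v
  obtain ⟨d, rfl⟩ := (hu.shift hn i).surjective w
  exact _root_.exists_isDescentStart (fun j hj hj' ↦ htb (hj.symm.trans hj')) hv hw

open Classical in
theorem exists_drawing_of_isDescentStart [Finite V] (hu : IsTraversal G n u) (hn : 3 ≤ n)
    (hne : ∀ v w : V, G.Adj v w → h v ≠ h w) (ht : ∀ v, h v ≤ t) (hb : ∀ v, b ≤ h v)
    (h0 : IsDescentStart (fun j ↦ h (u j) = t) (fun j ↦ h (u j) = b) 0) :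
    ∃ D : ReebDrawing G h, D.numCrossings = ((Nat.count
      (IsDescentStart (fun j ↦ h (u j) = t) fun j ↦ h (u j) = b) n - 1 : ℕ) : ℕ∞) := by
  have htb := hu.top_ne_bottom hne ht hb
  obtain ⟨S, hS⟩ := exists_staging (fun j hj hj' ↦ htb (hj.symm.trans hj')) h0
  have htn : h (u n) = t := hu.periodic.eq ▸ h0.1
  rw [← encard_invertedPairs_foldedLayout (hu := hu) hn ht hb (hS n htn)]
  exact (hu.foldedLayout S hn ht hb _).exists_drawing hne ht

open Classical in
theorem exists_drawing [Finite V] (hu : IsTraversal G n u) (hn : 3 ≤ n)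
    (hne : ∀ v w : V, G.Adj v w → h v ≠ h w) (ht : ∀ v, h v ≤ t) (htop : ∃ v, h v = t)
    (hb : ∀ v, b ≤ h v) (hbot : ∃ v, h v = b) :
    ∃ D : ReebDrawing G h, D.numCrossings = ((Nat.count
      (IsDescentStart (fun j ↦ h (u j) = t) fun j ↦ h (u j) = b) n - 1 : ℕ) : ℕ∞) := by
  have htb := hu.top_ne_bottom hne ht hb
  obtain ⟨r, hr⟩ := hu.exists_isDescentStart (Nat.zero_lt_of_lt hn) htb htop hbot
  have hperiodic : Function.Periodic
      (IsDescentStart (fun j ↦ h (u j) = t) fun j ↦ h (u j) = b) n :=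
    periodic_isDescentStart (fun j ↦ by rw [hu.periodic]) (fun j ↦ by rw [hu.periodic])
  rw [← count_add_of_periodic hperiodic r]
  simp only [isDescentStart_add_iff]
  exact (hu.shift (Nat.zero_lt_of_lt hn) r).exists_drawing_of_isDescentStart hn hne ht hb
    ((isDescentStart_add_iff r 0).1 hr)

end IsTraversal

open Classical in
theorem ncard_descents_eq_count {e : Fin n ≃ V} (hn : 0 < n) :
    {i : Fin n | h (e i) = t ∧ ∃ d : ℕ, 0 < d ∧ d ≤ n ∧ h (cycVert hn e (i.val + d)) = b ∧
      ∀ d' : ℕ, 0 < d' → d' < d → h (cycVert hn e (i.val + d')) ≠ t ∧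
        h (cycVert hn e (i.val + d')) ≠ b}.ncard =
      Nat.count (IsDescentStart (fun j ↦ h (cycVert hn e j) = t) fun j ↦
        h (cycVert hn e j) = b) n := by
  have hvert : ∀ i : Fin n, cycVert hn e i = e i := fun i ↦ by simp [cycVert, Nat.mod_eq_of_lt]
  have hbot : Function.Periodic (fun j ↦ h (cycVert hn e j) = b) n :=
    fun j ↦ by simp [cycVert]
  rw [← ncard_fin_eq_count]
  simp only [isDescentStart_iff_exists_le hbot hn, hvert, ne_eq]

end Drawing

/-- Let `(G, h)` be a Reeb graph (in particular, adjacent vertices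
have distinct heights, so that edges can be drawn `y`-monotonically) such that `G` is
a cycle, and let `k` be the top-down iteration number of the cycle with respect to
`h`: with `t` the maximum and `b` the minimum height on the cycle, `k` is the number
of alternations between reaching a top vertex and subsequently reaching a bottom
vertex while traversing the cycle; equivalently, `k` counts the vertices of height
`t` whose next vertex of extremal height (`t` or `b`) along the cyclic order has
height `b`. Then there exists a drawing of `(G, h)` with exactly `k - 1` crossings. -/
theorem cycle_drawing_top_down_iteration
    {V : Type*} [Fintype V] (G : SimpleGraph V) (h : V → ℝ)
    (n : ℕ) (hn : 3 ≤ n) (e : Fin n ≃ V) (hcyc : IsCycleEnum G e)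
    (hne : ∀ v w : V, G.Adj v w → h v ≠ h w)
    (t b : ℝ)
    (htmax : ∀ v : V, h v ≤ t) (htmem : ∃ v : V, h v = t)
    (hbmin : ∀ v : V, b ≤ h v) (hbmem : ∃ v : V, h v = b)
    (k : ℕ)
    (hk : k = Set.ncard {i : Fin n |
      h (e i) = t ∧
      ∃ d : ℕ, 0 < d ∧ d ≤ n ∧
        h (cycVert (by omega) e (i.val + d)) = b ∧
        ∀ d' : ℕ, 0 < d' → d' < d →
          h (cycVert (by omega) e (i.val + d')) ≠ t ∧
          h (cycVert (by omega) e (i.val + d')) ≠ b}) :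
    ∃ D : ReebDrawing G h, D.numCrossings = ((k - 1 : ℕ) : ℕ∞) := by
  rw [hk, ncard_descents_eq_count]
  exact (hcyc.isTraversal (Nat.zero_lt_of_lt hn)).exists_drawing hn hne htmax htmem hbmin hbmem
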